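/- For every v ∈ [1/1000, 618/1000], the rendezvous value of the asymmetric rendezvous game on the line with initial distance 1, slow-player speed bound v and fast-player speed bound 1, equals V(v) = (4v²+16v+8)/(1+v)², achieved by the wait-for-mummy strategy in which the slow player stays still until the second rendezvous time. -/

import Mathlib

/-!
Every meeting is a linear equation: `f - g = 1`, `f - g = -1`, `f + g = 1`, `f + g = -1`. Denote by
`A`, `B`, `C`, `D` the corresponding meeting times.

*Lower bound.* The infimum defining each meeting time is attained, because trajectories are
continuous (`meetTime_mem`). Once the order of the four times is fixed, the values of `f` and `g` at
these times satisfy finitely many linear inequalities, namely the speed bounds between consecutive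
times, and `A + B + C + D` is the objective of a linear program depending on the parameter `v`. The
sign changes `g ↦ -g` and `(f, g) ↦ (-f, -g)` permute the four equations transitively, so `A` may be
taken to be the first time, which leaves six orders. Each is settled by an explicit dual solution
whose multipliers are polynomials in `v` after clearing a power of `1 + v`
(`order_ABCD`, …, `order_ADCB`). The orders `A D B C` and `A D C B` are tight. The
hypothesis `v ≤ 0.618` enters through `v ^ 2 + v ≤ 1`: beyond that golden-ratio threshold the slack
of the order `A B C D` and a multiplier of the order `A D C B` become negative.

*Upper bound.* Put `U = 2 / (1 + v)`. The fast player runs to `-1` and turns back for good,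
`g t = |t - 1| - 1`; the slow player waits until time `1`, runs downwards until time `1 + U`, and
then runs upwards. The meetings take place at times `1`, `1`, `1 + U` and `1 + U + v U ^ 2`
(`isLeast_wait_first`, …, `isLeast_wait_fourth`).
-/

open Set

/-- `Strat α` is the set of trajectories with speed bound `α`: functions starting at `0`
which are `α`-Lipschitz on `[0, ∞)`. -/
def Strat (α : ℝ) : Set (ℝ → ℝ) :=
  {f | f 0 = 0 ∧ ∀ s t : ℝ, 0 ≤ s → 0 ≤ t → |f s - f t| ≤ α * |s - t|}

/-- The set of times at which player I (trajectory `f`) meets the agent of player II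
starting at `o` with forward direction `b` (trajectory `o + b • g`). -/
def meetSet (f g : ℝ → ℝ) (o b : ℝ) : Set ℝ := {t | 0 ≤ t ∧ f t = o + b * g t}

/-- The rendezvous time with the agent `(o, b)`. -/
noncomputable def meetTime (f g : ℝ → ℝ) (o b : ℝ) : ℝ := sInf (meetSet f g o b)

/-- All four rendezvous times are finite, i.e. the four meeting sets are nonempty. -/
def AllFinite (f g : ℝ → ℝ) : Prop :=
  (meetSet f g 1 1).Nonempty ∧ (meetSet f g 1 (-1)).Nonempty ∧
    (meetSet f g (-1) 1).Nonempty ∧ (meetSet f g (-1) (-1)).Nonempty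

/-- The sum `t¹ + t² + t³ + t⁴` of the four rendezvous times. -/
noncomputable def sumTimes (f g : ℝ → ℝ) : ℝ :=
  meetTime f g 1 1 + meetTime f g 1 (-1) + meetTime f g (-1) 1 + meetTime f g (-1) (-1)

/-- The multiset of the four rendezvous times of the pair `(f, g)`. -/
noncomputable def timesMultiset (f g : ℝ → ℝ) : Multiset ℝ :=
  {meetTime f g 1 1, meetTime f g 1 (-1), meetTime f g (-1) 1, meetTime f g (-1) (-1)}

/-- The rendezvous value of the game: infimum of `t¹ + t² + t³ + t⁴` over all pairs of
strategies with finite rendezvous times, for slow-player speed bound `v`. -/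
noncomputable def V (v : ℝ) : ℝ :=
  sInf {S | ∃ f ∈ Strat v, ∃ g ∈ Strat 1, AllFinite f g ∧ S = sumTimes f g}

/-! ### Trajectories -/

/-- The two one-sided speed bounds between times `s ≤ t`. -/
lemma strat_step {α : ℝ} {f : ℝ → ℝ} (hf : f ∈ Strat α) {s t : ℝ} (hs : 0 ≤ s) (hst : s ≤ t) :
    0 ≤ α * (t - s) - (f t - f s) ∧ 0 ≤ α * (t - s) + (f t - f s) := by
  have h := hf.2 t s (hs.trans hst) hs
  rw [abs_of_nonneg (sub_nonneg.2 hst)] at h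
  have := abs_le.1 h
  constructor <;> linarith [this.1, this.2]

lemma strat_step_zero {α : ℝ} {f : ℝ → ℝ} (hf : f ∈ Strat α) {t : ℝ} (ht : 0 ≤ t) :
    0 ≤ α * t - f t ∧ 0 ≤ α * t + f t := by
  simpa [hf.1] using strat_step hf le_rfl ht

lemma strat_neg {α : ℝ} {f : ℝ → ℝ} (hf : f ∈ Strat α) : (fun t => -f t) ∈ Strat α := by
  refine ⟨by simp [hf.1], fun s t hs ht => ?_⟩
  have := hf.2 t s ht hs
  rw [abs_sub_comm t s] at this
  rwa [show -f s - -f t = f t - f s by ring]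

lemma strat_continuousOn {α : ℝ} (hα : 0 ≤ α) {f : ℝ → ℝ} (hf : f ∈ Strat α) :
    ContinuousOn f (Ici 0) := by
  have : LipschitzOnWith ⟨α, hα⟩ f (Ici 0) := by
    refine LipschitzOnWith.of_dist_le_mul fun x hx y hy => ?_
    rw [Real.dist_eq, Real.dist_eq]
    exact hf.2 x y hx hy
  exact this.continuousOn

/-- A finite meeting time is attained, since the meeting set is closed. -/
lemma meetTime_mem {v : ℝ} (hv : 0 ≤ v) {f g : ℝ → ℝ} (hf : f ∈ Strat v) (hg : g ∈ Strat 1)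
    {o b : ℝ} (hne : (meetSet f g o b).Nonempty) : meetTime f g o b ∈ meetSet f g o b := by
  have hcl : IsClosed (meetSet f g o b) := by
    have hc : ContinuousOn (fun t => f t - (o + b * g t)) (Ici 0) :=
      (strat_continuousOn hv hf).sub
        (continuousOn_const.add (continuousOn_const.mul (strat_continuousOn zero_le_one hg)))
    have := hc.preimage_isClosed_of_isClosed isClosed_Ici (isClosed_singleton (x := (0 : ℝ)))
    convert this using 1
    ext t
    simp [meetSet, sub_eq_zero]
  exact hcl.csInf_mem hne ⟨0, fun t ht => ht.1⟩

/-! ### Dual certificates for the six orders -/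

section Orders

variable {v : ℝ} {f g : ℝ → ℝ} {A B C D : ℝ}

/-- Two linear bounds on powers of `v`, from which `linarith` derives the sign of every multiplier
and slack below. -/
lemma pow_bounds (h0 : 0 ≤ v) (h1 : v ≤ 618 / 1000) :
    v ^ 2 ≤ 618 / 1000 * v ∧ v ^ 3 ≤ 618 / 1000 * v ^ 2 := by
  constructor <;> nlinarith [mul_nonneg h0 (sub_nonneg.2 h1), mul_nonneg h0 h0]

-- In the following lemmas `fXY_le`, `fXY_ge` are the upper and lower speed bounds on `f Y - f X`,
-- multiplied by the corresponding dual variable; likewise for `g`. The speed bounds from time `0`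
-- to time `A` carry the label `0A`.

/-- The bound for `A ≤ B ≤ C ≤ D`, up to the nonnegative slack `4 (1 - v - v ^ 2)`: the golden-ratio
threshold on `v`. -/
lemma order_ABCD (h0 : 0 ≤ v) (h1 : v ≤ 618 / 1000) (hf : f ∈ Strat v) (hg : g ∈ Strat 1)
    (hA : 0 ≤ A) (eA : f A - g A = 1) (eB : f B - g B = -1) (eC : f C + g C = 1)
    (eD : f D + g D = -1) (hAB : A ≤ B) (hBC : B ≤ C) (hCD : C ≤ D) :
    4 * v ^ 2 + 16 * v + 8 ≤ (A + B + C + D) * (1 + v) ^ 2 := by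
  have hB : 0 ≤ B := hA.trans hAB
  have hC : 0 ≤ C := hB.trans hBC
  obtain ⟨hv2, hv3⟩ := pow_bounds h0 h1
  have gA : g A = f A - 1 := by linarith
  have gB : g B = f B + 1 := by linarith
  have gC : g C = 1 - f C := by linarith
  have gD : g D = -1 - f D := by linarith
  have f0A_le := mul_nonneg (show 0 ≤ 4 + 4 * v by positivity) (strat_step_zero hf hA).1
  have g0A_ge := mul_nonneg (show 0 ≤ 4 + 4 * v by positivity) (strat_step_zero hg hA).2
  have fAB_ge := mul_nonneg (show 0 ≤ 3 + 3 * v by positivity) (strat_step hf hA hAB).2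
  have gAB_le := mul_nonneg (show 0 ≤ 3 + 3 * v by positivity) (strat_step hg hA hAB).1
  have gBC_le := mul_nonneg (show 0 ≤ 1 + 2 * v + v ^ 2 by positivity) (strat_step hg hB hBC).1
  have gBC_ge := mul_nonneg (show 0 ≤ 1 + 2 * v + v ^ 2 by positivity) (strat_step hg hB hBC).2
  have fCD_ge := mul_nonneg (show 0 ≤ 1 + v by positivity) (strat_step hf hC hCD).2
  have gCD_ge := mul_nonneg (show 0 ≤ 1 + v by positivity) (strat_step hg hC hCD).2
  have slack : 0 ≤ 4 - 4 * v - 4 * v ^ 2 := by linarith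
  rw [gA] at g0A_ge gAB_le
  rw [gB] at gAB_le gBC_le gBC_ge
  rw [gC] at gBC_le gBC_ge gCD_ge
  rw [gD] at gCD_ge
  linear_combination f0A_le + g0A_ge + fAB_ge + gAB_le + gBC_le + gBC_ge + fCD_ge + gCD_ge + slack

/-- The bound for `A ≤ B ≤ D ≤ C`, with positive slack. -/
lemma order_ABDC (h0 : 0 ≤ v) (h1 : v ≤ 618 / 1000) (hf : f ∈ Strat v) (hg : g ∈ Strat 1)
    (hA : 0 ≤ A) (eA : f A - g A = 1) (eB : f B - g B = -1) (eC : f C + g C = 1)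
    (eD : f D + g D = -1) (hAB : A ≤ B) (hBD : B ≤ D) (hDC : D ≤ C) :
    4 * v ^ 2 + 16 * v + 8 ≤ (A + B + C + D) * (1 + v) ^ 2 := by
  have hB : 0 ≤ B := hA.trans hAB
  have hD : 0 ≤ D := hB.trans hBD
  obtain ⟨hv2, hv3⟩ := pow_bounds h0 h1
  have gA : g A = f A - 1 := by linarith
  have gB : g B = f B + 1 := by linarith
  have gC : g C = 1 - f C := by linarith
  have gD : g D = -1 - f D := by linarith
  have f0A_le := mul_nonneg (show 0 ≤ 4 * v by positivity) (strat_step_zero hf hA).1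
  have g0A_ge := mul_nonneg (show 0 ≤ 4 + 8 * v by positivity) (strat_step_zero hg hA).2
  have fAB_ge := mul_nonneg (show 0 ≤ 7 + 3 * v by positivity) (strat_step hf hA hAB).2
  have gAB_le := mul_nonneg (show 0 ≤ 3 - v by linarith) (strat_step hg hA hAB).1
  have fBD_ge := mul_nonneg (show 0 ≤ 2 + 2 * v by positivity) (strat_step hf hB hBD).2
  have gBD_ge := mul_nonneg (show 0 ≤ 2 + 2 * v by positivity) (strat_step hg hB hBD).2
  have fDC_le := mul_nonneg (show 0 ≤ 1 + v by positivity) (strat_step hf hD hDC).1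
  have gDC_le := mul_nonneg (show 0 ≤ 1 + v by positivity) (strat_step hg hD hDC).1
  have slack : 0 ≤ 8 - 4 * v - 4 * v ^ 2 := by linarith
  rw [gA] at g0A_ge gAB_le
  rw [gB] at gAB_le gBD_ge
  rw [gC] at gDC_le
  rw [gD] at gBD_ge gDC_le
  linear_combination f0A_le + g0A_ge + fAB_ge + gAB_le + fBD_ge + gBD_ge + fDC_le + gDC_le + slack

/-- The bound for `A ≤ C ≤ B ≤ D`, with positive slack. Two dual solutions are needed, one on each
side of the positive root of `3 v ^ 2 + 4 v = 3`, where a multiplier of either changes sign. -/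
lemma order_ACBD (h0 : 0 ≤ v) (h1 : v ≤ 618 / 1000) (hf : f ∈ Strat v) (hg : g ∈ Strat 1)
    (hA : 0 ≤ A) (eA : f A - g A = 1) (eB : f B - g B = -1) (eC : f C + g C = 1)
    (eD : f D + g D = -1) (hAC : A ≤ C) (hCB : C ≤ B) (hBD : B ≤ D) :
    4 * v ^ 2 + 16 * v + 8 ≤ (A + B + C + D) * (1 + v) ^ 2 := by
  have hC : 0 ≤ C := hA.trans hAC
  have hB : 0 ≤ B := hC.trans hCB
  obtain ⟨hv2, hv3⟩ := pow_bounds h0 h1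
  have gA : g A = f A - 1 := by linarith
  have gB : g B = f B + 1 := by linarith
  have gC : g C = 1 - f C := by linarith
  have gD : g D = -1 - f D := by linarith
  rcases le_total (3 * v ^ 2 + 4 * v) 3 with hc | hc
  · -- The dual solution for small `v`, scaled by `(1 + v) ^ 2`.
    have f0A_le := mul_nonneg (show 0 ≤ 7 + 7 * v by positivity) (strat_step_zero hf hA).1
    have g0A_ge := mul_nonneg (show 0 ≤ 4 + v - 3 * v ^ 2 by linarith) (strat_step_zero hg hA).2
    have gAC_le := mul_nonneg (show 0 ≤ 3 + 6 * v + 3 * v ^ 2 by positivity)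
      (strat_step hg hA hAC).1
    have fCB_ge := mul_nonneg (show 0 ≤ 5 / 2 + 4 * v + 3 / 2 * v ^ 2 by positivity)
      (strat_step hf hC hCB).2
    have gCB_le := mul_nonneg (show 0 ≤ (1 + v) * (5 + 2 * v - 3 * v ^ 2) / 4 by
      exact div_nonneg (mul_nonneg (by linarith) (by linarith)) (by norm_num))
      (strat_step hg hC hCB).1
    have gCB_ge := mul_nonneg (show 0 ≤ (1 + v) * (3 - 4 * v - 3 * v ^ 2) / 4 by
      exact div_nonneg (mul_nonneg (by linarith) (by linarith)) (by norm_num))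
      (strat_step hg hC hCB).2
    have fBD_ge := mul_nonneg (show 0 ≤ 1 + v by positivity) (strat_step hf hB hBD).2
    have gBD_ge := mul_nonneg (show 0 ≤ 1 + v by positivity) (strat_step hg hB hBD).2
    have slack : 0 ≤ 4 - v - v ^ 2 := by linarith
    rw [gA] at g0A_ge gAC_le
    rw [gB] at gCB_le gCB_ge gBD_ge
    rw [gC] at gAC_le gCB_le gCB_ge
    rw [gD] at gBD_ge
    linear_combination f0A_le + g0A_ge + gAC_le + fCB_ge + gCB_le + gCB_ge + fBD_ge + gBD_ge +
      slack
  · -- The dual solution for larger `v`, scaled by `(1 + v) ^ 3`.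
    have f0A_le := mul_nonneg (show 0 ≤ 10 + 10 * v + 4 * v ^ 2 by positivity)
      (strat_step_zero hf hA).1
    have g0A_ge := mul_nonneg (show 0 ≤ 4 + 2 * v + 2 * v ^ 2 by positivity)
      (strat_step_zero hg hA).2
    have gAC_le := mul_nonneg (show 0 ≤ 9 / 2 + 17 / 2 * v + 11 / 2 * v ^ 2 + 3 / 2 * v ^ 3 by
      positivity) (strat_step hg hA hAC).1
    have gAC_ge := mul_nonneg (show 0 ≤ (1 + v) * (3 * v ^ 2 + 4 * v - 3) / 2 by
      exact div_nonneg (mul_nonneg (by linarith) (by linarith)) (by norm_num))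
      (strat_step hg hA hAC).2
    have fCB_ge := mul_nonneg (show 0 ≤ 4 + 6 * v + 2 * v ^ 2 by positivity)
      (strat_step hf hC hCB).2
    have gCB_le := mul_nonneg (show 0 ≤ 2 + 2 * v by positivity) (strat_step hg hC hCB).1
    have fBD_ge := mul_nonneg (show 0 ≤ 1 + 2 * v + v ^ 2 by positivity) (strat_step hf hB hBD).2
    have gBD_ge := mul_nonneg (show 0 ≤ 1 + 2 * v + v ^ 2 by positivity) (strat_step hg hB hBD).2
    have slack : 0 ≤ 10 - 2 * v - 12 * v ^ 2 - 4 * v ^ 3 := by linarith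
    rw [gA] at g0A_ge gAC_le gAC_ge
    rw [gB] at gCB_le gBD_ge
    rw [gC] at gAC_le gAC_ge gCB_le
    rw [gD] at gBD_ge
    have hpos : 0 < 1 + v := by linarith
    refine le_of_mul_le_mul_right ?_ hpos
    linear_combination f0A_le + g0A_ge + gAC_le + gAC_ge + fCB_ge + gCB_le + fBD_ge + gBD_ge +
      slack

/-- The bound for `A ≤ C ≤ D ≤ B`, with positive slack; the dual solution is scaled by
`(1 + v) ^ 3`. -/
lemma order_ACDB (h0 : 0 ≤ v) (h1 : v ≤ 618 / 1000) (hf : f ∈ Strat v) (hg : g ∈ Strat 1)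
    (hA : 0 ≤ A) (eA : f A - g A = 1) (eB : f B - g B = -1) (eC : f C + g C = 1)
    (eD : f D + g D = -1) (hAC : A ≤ C) (hCD : C ≤ D) (hDB : D ≤ B) :
    4 * v ^ 2 + 16 * v + 8 ≤ (A + B + C + D) * (1 + v) ^ 2 := by
  have hC : 0 ≤ C := hA.trans hAC
  have hD : 0 ≤ D := hC.trans hCD
  obtain ⟨hv2, hv3⟩ := pow_bounds h0 h1
  have gA : g A = f A - 1 := by linarith
  have gB : g B = f B + 1 := by linarith
  have gC : g C = 1 - f C := by linarith
  have gD : g D = -1 - f D := by linarith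
  have f0A_le := mul_nonneg (show 0 ≤ 8 + 16 * v + 4 * v ^ 2 by positivity)
    (strat_step_zero hf hA).1
  have g0A_ge := mul_nonneg (show 0 ≤ 4 + 4 * v - 4 * v ^ 2 by linarith) (strat_step_zero hg hA).2
  have fAC_le := mul_nonneg (show 0 ≤ 1 + 4 * v + 3 * v ^ 2 by positivity) (strat_step hf hA hAC).1
  have gAC_le := mul_nonneg (show 0 ≤ 3 + 8 * v + 5 * v ^ 2 by positivity) (strat_step hg hA hAC).1
  have fCD_ge := mul_nonneg (show 0 ≤ 4 + 6 * v + 2 * v ^ 2 by positivity) (strat_step hf hC hCD).2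
  have gCD_ge := mul_nonneg (show 0 ≤ 2 + 2 * v by positivity) (strat_step hg hC hCD).2
  have fDB_ge := mul_nonneg (show 0 ≤ 1 + 2 * v + v ^ 2 by positivity) (strat_step hf hD hDB).2
  have gDB_le := mul_nonneg (show 0 ≤ 1 + 2 * v + v ^ 2 by positivity) (strat_step hg hD hDB).1
  have slack : 0 ≤ 8 + 4 * v - 12 * v ^ 2 - 4 * v ^ 3 := by linarith
  rw [gA] at g0A_ge gAC_le
  rw [gB] at gDB_le
  rw [gC] at gAC_le gCD_ge
  rw [gD] at gCD_ge gDB_le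
  have hpos : 0 < 1 + v := by linarith
  refine le_of_mul_le_mul_right ?_ hpos
  linear_combination f0A_le + g0A_ge + fAC_le + gAC_le + fCD_ge + gCD_ge + fDB_ge + gDB_le + slack

/-- The bound for `A ≤ D ≤ B ≤ C`, which is tight: this is the order of the wait-for-mummy
strategy. -/
lemma order_ADBC (h0 : 0 ≤ v) (h1 : v ≤ 618 / 1000) (hf : f ∈ Strat v) (hg : g ∈ Strat 1)
    (hA : 0 ≤ A) (eA : f A - g A = 1) (eB : f B - g B = -1) (eC : f C + g C = 1)
    (eD : f D + g D = -1) (hAD : A ≤ D) (hDB : D ≤ B) (hBC : B ≤ C) :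
    4 * v ^ 2 + 16 * v + 8 ≤ (A + B + C + D) * (1 + v) ^ 2 := by
  have hD : 0 ≤ D := hA.trans hAD
  have hB : 0 ≤ B := hD.trans hDB
  obtain ⟨hv2, hv3⟩ := pow_bounds h0 h1
  have gA : g A = f A - 1 := by linarith
  have gB : g B = f B + 1 := by linarith
  have gC : g C = 1 - f C := by linarith
  have gD : g D = -1 - f D := by linarith
  have g0A_ge := mul_nonneg (show 0 ≤ 4 + 8 * v + 4 * v ^ 2 by positivity)
    (strat_step_zero hg hA).2
  have fAD_ge := mul_nonneg (show 0 ≤ 3 + 7 * v + 2 * v ^ 2 by positivity) (strat_step hf hA hAD).2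
  have gAD_le := mul_nonneg (show 0 ≤ 1 + v - 3 * v ^ 2 - v ^ 3 by linarith)
    (strat_step hg hA hAD).1
  have gAD_ge := mul_nonneg (show 0 ≤ 2 + 2 * v - v ^ 2 - v ^ 3 by linarith)
    (strat_step hg hA hAD).2
  have fDB_ge := mul_nonneg (show 0 ≤ 2 * v by positivity) (strat_step hf hD hDB).2
  have gDB_le := mul_nonneg (show 0 ≤ 2 + 4 * v by positivity) (strat_step hg hD hDB).1
  have fBC_le := mul_nonneg (show 0 ≤ 1 + v by positivity) (strat_step hf hB hBC).1
  have gBC_le := mul_nonneg (show 0 ≤ 1 + v by positivity) (strat_step hg hB hBC).1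
  rw [gA] at g0A_ge gAD_le gAD_ge
  rw [gB] at gDB_le gBC_le
  rw [gC] at gBC_le
  rw [gD] at gAD_le gAD_ge gDB_le
  linear_combination g0A_ge + fAD_ge + gAD_le + gAD_ge + fDB_ge + gDB_le + fBC_le + gBC_le

/-- The bound for `A ≤ D ≤ C ≤ B`, tight as well: in the wait-for-mummy strategy the slow player may
visit the two remaining agents in either order. -/
lemma order_ADCB (h0 : 0 ≤ v) (h1 : v ≤ 618 / 1000) (hf : f ∈ Strat v) (hg : g ∈ Strat 1)
    (hA : 0 ≤ A) (eA : f A - g A = 1) (eB : f B - g B = -1) (eC : f C + g C = 1)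
    (eD : f D + g D = -1) (hAD : A ≤ D) (hDC : D ≤ C) (hCB : C ≤ B) :
    4 * v ^ 2 + 16 * v + 8 ≤ (A + B + C + D) * (1 + v) ^ 2 := by
  have hD : 0 ≤ D := hA.trans hAD
  have hC : 0 ≤ C := hD.trans hDC
  obtain ⟨hv2, hv3⟩ := pow_bounds h0 h1
  have gA : g A = f A - 1 := by linarith
  have gB : g B = f B + 1 := by linarith
  have gC : g C = 1 - f C := by linarith
  have gD : g D = -1 - f D := by linarith
  have g0A_ge := mul_nonneg (show 0 ≤ 4 + 8 * v + 4 * v ^ 2 by positivity)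
    (strat_step_zero hg hA).2
  have fAD_ge := mul_nonneg (show 0 ≤ 3 + 5 * v + 2 * v ^ 2 by positivity) (strat_step hf hA hAD).2
  have gAD_le := mul_nonneg (show 0 ≤ 1 - 2 * v ^ 2 - v ^ 3 by linarith) (strat_step hg hA hAD).1
  have gAD_ge := mul_nonneg (show 0 ≤ 2 + 3 * v - v ^ 3 by linarith) (strat_step hg hA hAD).2
  have fDC_le := mul_nonneg (show 0 ≤ 2 * v by positivity) (strat_step hf hD hDC).1
  have gDC_le := mul_nonneg (show 0 ≤ 2 + 4 * v by positivity) (strat_step hg hD hDC).1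
  have fCB_ge := mul_nonneg (show 0 ≤ 1 + v by positivity) (strat_step hf hC hCB).2
  have gCB_le := mul_nonneg (show 0 ≤ 1 + v by positivity) (strat_step hg hC hCB).1
  rw [gA] at g0A_ge gAD_le gAD_ge
  rw [gB] at gCB_le
  rw [gC] at gDC_le gCB_le
  rw [gD] at gAD_le gAD_ge gDC_le
  linear_combination g0A_ge + fAD_ge + gAD_le + gAD_ge + fDC_le + gDC_le + fCB_ge + gCB_le

/-- The lower bound when the meeting `f - g = 1` comes first. -/
lemma bound_of_first (h0 : 0 ≤ v) (h1 : v ≤ 618 / 1000) (hf : f ∈ Strat v) (hg : g ∈ Strat 1)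
    (hA : 0 ≤ A) (eA : f A - g A = 1) (eB : f B - g B = -1) (eC : f C + g C = 1)
    (eD : f D + g D = -1) (hAB : A ≤ B) (hAC : A ≤ C) (hAD : A ≤ D) :
    4 * v ^ 2 + 16 * v + 8 ≤ (A + B + C + D) * (1 + v) ^ 2 := by
  rcases le_total B C with hBC | hBC <;> rcases le_total B D with hBD | hBD <;>
    rcases le_total C D with hCD | hCD
  · exact order_ABCD h0 h1 hf hg hA eA eB eC eD hAB hBC hCD
  · exact order_ABDC h0 h1 hf hg hA eA eB eC eD hAB hBD hCD
  · exact order_ADBC h0 h1 hf hg hA eA eB eC eD hAD hBD hBC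
  · exact order_ADBC h0 h1 hf hg hA eA eB eC eD hAD hBD hBC
  · exact order_ACBD h0 h1 hf hg hA eA eB eC eD hAC hBC hBD
  · exact order_ACBD h0 h1 hf hg hA eA eB eC eD hAC hBC hBD
  · exact order_ACDB h0 h1 hf hg hA eA eB eC eD hAC hCD hBD
  · exact order_ADCB h0 h1 hf hg hA eA eB eC eD hAD hCD hBC

/-- The lower bound in general: the sign changes `g ↦ -g` and `(f, g) ↦ (-f, -g)` reduce it to the
case where `A` is the first of the four times. -/
lemma bound (h0 : 0 ≤ v) (h1 : v ≤ 618 / 1000) (hf : f ∈ Strat v) (hg : g ∈ Strat 1)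
    (hA : 0 ≤ A) (hB : 0 ≤ B) (hC : 0 ≤ C) (hD : 0 ≤ D)
    (eA : f A - g A = 1) (eB : f B - g B = -1) (eC : f C + g C = 1) (eD : f D + g D = -1) :
    4 * v ^ 2 + 16 * v + 8 ≤ (A + B + C + D) * (1 + v) ^ 2 := by
  have hmin : (A ≤ B ∧ A ≤ C ∧ A ≤ D) ∨ (B ≤ A ∧ B ≤ C ∧ B ≤ D) ∨
      (C ≤ A ∧ C ≤ B ∧ C ≤ D) ∨ (D ≤ A ∧ D ≤ B ∧ D ≤ C) := by
    grind
  rcases hmin with ⟨a, b, c⟩ | ⟨a, b, c⟩ | ⟨a, b, c⟩ | ⟨a, b, c⟩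
  · exact bound_of_first h0 h1 hf hg hA eA eB eC eD a b c
  · have := bound_of_first (A := B) (B := A) (C := D) (D := C) h0 h1 (strat_neg hf)
      (strat_neg hg) hB (by linarith) (by linarith) (by linarith) (by linarith) a c b
    linarith
  · have := bound_of_first (A := C) (B := D) (C := A) (D := B) h0 h1 hf (strat_neg hg) hC
      (by linarith) (by linarith) (by linarith) (by linarith) c a b
    linarith
  · have := bound_of_first (A := D) (B := C) (C := B) (D := A) h0 h1 (strat_neg hf) hg hD
      (by linarith) (by linarith) (by linarith) (by linarith) c b a
    linarith

end Orders

/-! ### The wait-for-mummy strategy -/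

/-- The duration `2 / (1 + v)` of the slow player's first run, at the end of which the third
meeting takes place. -/
noncomputable def runTime (v : ℝ) : ℝ := 2 / (1 + v)

/-- The slow player waits until time `1`, runs downwards until time `1 + runTime v`, and runs
upwards afterwards. The truncation at `0` encodes the waiting period; it also stops the upward run
at the origin, which happens only after the last meeting. -/
noncomputable def waitSlow (v t : ℝ) : ℝ := v * min 0 (|t - (1 + runTime v)| - runTime v)

/-- The fast player runs down to `-1`, reached at time `1`, and runs upwards afterwards. -/
noncomputable def waitFast (t : ℝ) : ℝ := |t - 1| - 1

section Wait

variable {v : ℝ}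

lemma runTime_eq (h0 : 0 ≤ v) : (1 + v) * runTime v = 2 := by
  unfold runTime
  field_simp

lemma runTime_pos (h0 : 0 ≤ v) : 0 < runTime v := by
  unfold runTime
  positivity

lemma waitSlow_mem (h0 : 0 ≤ v) : waitSlow v ∈ Strat v := by
  have hU := runTime_pos h0
  refine ⟨?_, fun s t _ _ => ?_⟩
  · have : |0 - (1 + runTime v)| = 1 + runTime v := by
      rw [zero_sub, abs_neg, abs_of_pos (by linarith)]
    rw [waitSlow, this, min_eq_left (by linarith), mul_zero]
  · rw [waitSlow, waitSlow, ← mul_sub, abs_mul, abs_of_nonneg h0]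
    refine mul_le_mul_of_nonneg_left ?_ h0
    refine (abs_min_sub_min_le_max _ _ _ _).trans ?_
    rw [sub_self, abs_zero, max_eq_right (abs_nonneg _)]
    rw [sub_sub_sub_cancel_right]
    refine (abs_abs_sub_abs_le_abs_sub _ _).trans ?_
    rw [sub_sub_sub_cancel_right]

lemma waitFast_mem : waitFast ∈ Strat 1 := by
  refine ⟨by simp [waitFast], fun s t _ _ => ?_⟩
  rw [waitFast, waitFast, sub_sub_sub_cancel_right, one_mul]
  refine (abs_abs_sub_abs_le_abs_sub _ _).trans ?_
  rw [sub_sub_sub_cancel_right]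

lemma waitSlow_eq_zero (h0 : 0 ≤ v) {t : ℝ} (ht : t ≤ 1) : waitSlow v t = 0 := by
  have hU := runTime_pos h0
  rw [waitSlow, abs_of_nonpos (by linarith), min_eq_left (by linarith), mul_zero]

lemma waitSlow_of_le {t : ℝ} (h1t : 1 ≤ t) (ht : t ≤ 1 + runTime v) :
    waitSlow v t = -(v * (t - 1)) := by
  rw [waitSlow, abs_of_nonpos (by linarith), min_eq_right (by linarith)]
  ring

lemma waitSlow_of_ge {t : ℝ} (ht : 1 + runTime v ≤ t) (ht' : t ≤ 1 + 2 * runTime v) :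
    waitSlow v t = v * (t - 1 - 2 * runTime v) := by
  rw [waitSlow, abs_of_nonneg (by linarith), min_eq_right (by linarith)]
  ring

lemma isLeast_wait_first (h0 : 0 ≤ v) : IsLeast (meetSet (waitSlow v) waitFast 1 1) 1 := by
  refine ⟨⟨zero_le_one, ?_⟩, fun t ⟨_, h⟩ => ?_⟩
  · rw [waitSlow_eq_zero h0 le_rfl]
    simp [waitFast]
  · by_contra! hlt
    rw [waitSlow_eq_zero h0 hlt.le, waitFast, abs_of_neg (by linarith)] at h
    linarith

lemma isLeast_wait_second (h0 : 0 ≤ v) :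
    IsLeast (meetSet (waitSlow v) waitFast (-1) (-1)) 1 := by
  refine ⟨⟨zero_le_one, ?_⟩, fun t ⟨_, h⟩ => ?_⟩
  · rw [waitSlow_eq_zero h0 le_rfl]
    simp [waitFast]
  · by_contra! hlt
    rw [waitSlow_eq_zero h0 hlt.le, waitFast, abs_of_neg (by linarith)] at h
    linarith

lemma isLeast_wait_third (h0 : 0 ≤ v) :
    IsLeast (meetSet (waitSlow v) waitFast (-1) 1) (1 + runTime v) := by
  have hU := runTime_pos h0
  have hE := runTime_eq h0
  refine ⟨⟨by linarith, ?_⟩, fun t ⟨ht, h⟩ => ?_⟩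
  · rw [waitSlow_of_le (by linarith) le_rfl, waitFast, abs_of_nonneg (by linarith)]
    linarith
  · by_contra! hlt
    rcases le_total t 1 with h1 | h1
    · rw [waitSlow_eq_zero h0 h1, waitFast, abs_of_nonpos (by linarith)] at h
      linarith
    · rw [waitSlow_of_le h1 hlt.le, waitFast, abs_of_nonneg (by linarith)] at h
      have : (1 + v) * (t - 1) = (1 + v) * runTime v := by linarith
      have := mul_left_cancel₀ (by positivity) this
      linarith

lemma isLeast_wait_fourth (h0 : 0 ≤ v) (h1 : v ≤ 1) :
    IsLeast (meetSet (waitSlow v) waitFast 1 (-1)) (1 + runTime v + v * runTime v ^ 2) := by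
  have hU := runTime_pos h0
  have hE := runTime_eq h0
  have hQ : 0 ≤ v * runTime v ^ 2 := by positivity
  -- `v U ≤ 1`, so the last meeting happens before the slow player is back at the origin.
  have hvU : v * runTime v ^ 2 ≤ runTime v := by
    nlinarith [mul_nonneg hU.le (mul_nonneg (sub_nonneg.2 h1) hU.le)]
  have hE2 : (1 + v) * (v * runTime v ^ 2) = 2 * (v * runTime v) := by
    linear_combination v * runTime v * hE
  refine ⟨⟨by linarith, ?_⟩, fun t ⟨ht, h⟩ => ?_⟩
  · rw [waitSlow_of_ge (by linarith) (by linarith), waitFast, abs_of_nonneg (by linarith)]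
    linarith
  · by_contra! hlt
    rcases le_total t 1 with ht1 | ht1
    · rw [waitSlow_eq_zero h0 ht1, waitFast, abs_of_nonpos (by linarith)] at h
      linarith
    rcases le_total t (1 + runTime v) with htU | htU
    · rw [waitSlow_of_le ht1 htU, waitFast, abs_of_nonneg (by linarith)] at h
      -- `(1 - v) (t - 1) = 2 = (1 + v) U` contradicts `t - 1 ≤ U`, except for `v = 0`, `t = 1 + U`,
      -- which `t < 1 + U + v U ^ 2` excludes.
      rcases h0.eq_or_lt with rfl | hv
      · linarith
      · nlinarith [mul_pos hv hU, mul_le_mul_of_nonneg_left htU (sub_nonneg.2 h1)]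
    · rw [waitSlow_of_ge htU (by linarith), waitFast, abs_of_nonneg (by linarith)] at h
      have : (1 + v) * (t - 1) = (1 + v) * (runTime v + v * runTime v ^ 2) := by linarith
      have := mul_left_cancel₀ (by positivity) this
      linarith

end Wait

/-- For `v ∈ [1/1000, 618/1000]` the rendezvous value equals
`(4v² + 16v + 8)/(1 + v)²`, and it is achieved by a wait-for-mummy strategy in which the
slow player stays still until the second rendezvous time. -/
theorem rendezvous_value_small_speed (v : ℝ) (hv : v ∈ Icc (1 / 1000 : ℝ) (618 / 1000)) :
    V v = (4 * v ^ 2 + 16 * v + 8) / (1 + v) ^ 2 ∧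
      ∃ f ∈ Strat v, ∃ g ∈ Strat 1, AllFinite f g ∧ sumTimes f g = V v ∧
        ∃ t1 t2 t3 t4 : ℝ, 0 ≤ t1 ∧ t1 ≤ t2 ∧ t2 ≤ t3 ∧ t3 ≤ t4 ∧
          timesMultiset f g = {t1, t2, t3, t4} ∧
          ∀ s, 0 ≤ s → s ≤ t2 → f s = 0 := by
  have h0 : 0 ≤ v := le_trans (by norm_num) hv.1
  have h1 : v ≤ 618 / 1000 := hv.2
  have hv1 : v ≤ 1 := h1.trans (by norm_num)
  have hU := runTime_pos h0
  have i1 := isLeast_wait_first h0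
  have i2 := isLeast_wait_fourth h0 hv1
  have i3 := isLeast_wait_third h0
  have i4 := isLeast_wait_second h0
  have m1 : meetTime (waitSlow v) waitFast 1 1 = 1 := i1.csInf_eq
  have m2 : meetTime (waitSlow v) waitFast 1 (-1) = 1 + runTime v + v * runTime v ^ 2 :=
    i2.csInf_eq
  have m3 : meetTime (waitSlow v) waitFast (-1) 1 = 1 + runTime v := i3.csInf_eq
  have m4 : meetTime (waitSlow v) waitFast (-1) (-1) = 1 := i4.csInf_eq
  have hfin : AllFinite (waitSlow v) waitFast := ⟨⟨_, i1.1⟩, ⟨_, i2.1⟩, ⟨_, i3.1⟩, ⟨_, i4.1⟩⟩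
  have hsum : sumTimes (waitSlow v) waitFast = (4 * v ^ 2 + 16 * v + 8) / (1 + v) ^ 2 := by
    rw [sumTimes, m1, m2, m3, m4, runTime]
    field_simp
    ring
  have hV : V v = (4 * v ^ 2 + 16 * v + 8) / (1 + v) ^ 2 := by
    refine IsLeast.csInf_eq ⟨⟨_, waitSlow_mem h0, _, waitFast_mem, hfin, hsum.symm⟩, ?_⟩
    rintro S ⟨f, hf, g, hg, ⟨n1, n2, n3, n4⟩, rfl⟩
    have k1 := meetTime_mem h0 hf hg n1
    have k2 := meetTime_mem h0 hf hg n2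
    have k3 := meetTime_mem h0 hf hg n3
    have k4 := meetTime_mem h0 hf hg n4
    have := bound h0 h1 hf hg k1.1 k3.1 k2.1 k4.1 (by linarith [k1.2]) (by linarith [k3.2])
      (by linarith [k2.2]) (by linarith [k4.2])
    rw [div_le_iff₀ (by positivity), sumTimes]
    linarith
  refine ⟨hV, _, waitSlow_mem h0, _, waitFast_mem, hfin, hsum.trans hV.symm,
    1, 1, 1 + runTime v, 1 + runTime v + v * runTime v ^ 2, zero_le_one, le_rfl, by linarith, ?_,
    ?_, fun s _ hs => waitSlow_eq_zero h0 hs⟩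
  · have : 0 ≤ v * runTime v ^ 2 := by positivity
    linarith
  · rw [timesMultiset, m1, m2, m3, m4]
    simp only [Multiset.insert_eq_cons]
    rw [Multiset.cons_swap (1 + runTime v + _) (1 + runTime v), ← Multiset.cons_zero,
      Multiset.cons_swap (1 + runTime v + _) 1, Multiset.cons_swap (1 + runTime v) 1]
    rfl
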